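/- For the spherical normal model with unknown variance of dimension d ≥ 2, the three cumulant contractions appearing in the first-order term take the constant values: Σ κ_{i_1 i_2 i_3 i_4} g^{i_1 i_2} g^{i_3 i_4} = (8d+4)/(d-1), Σ κ_{i_1 i_2 i_3} κ_{i_4 i_5 i_6} g^{i_1 i_2} g^{i_3 i_4} g^{i_5 i_6} = (2d² + 4d + 2)/(d-1), and Σ κ_{i_1 i_2 i_3} κ_{i_4 i_5 i_6} g^{i_1 i_4} g^{i_2 i_5} g^{i_3 i_6} = (6d+2)/(d-1), so that F₁ = (1/8)(8d+4)/(d-1) - (1/8)(2d²+4d+2)/(d-1) - (1/12)(6d+2)/(d-1) = (1 - 3d²)/(12(d-1)). -/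

import Mathlib

open Real Matrix

/-- The `i`-th partial derivative of a function on `ℝ^d`. -/
noncomputable def pd {d : ℕ} (i : Fin d) (f : (Fin d → ℝ) → ℝ) : (Fin d → ℝ) → ℝ :=
  fun x => fderiv ℝ f x (Pi.single i 1)

/-- The log-partition function of the spherical normal family `N_{d-1}(β, σ² I_{d-1})` in its
natural parameterisation, with `d = k + 1`:
`ψ(θ) = ((1-d)/2) log(-2θ_d) - (θ_1² + ... + θ_{d-1}²)/(4θ_d)`. -/
noncomputable def psiSph (k : ℕ) (θ : Fin (k + 1) → ℝ) : ℝ :=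
  ((1 - ((k : ℝ) + 1)) / 2) * Real.log (-2 * θ (Fin.last k)) -
    (∑ i : Fin k, θ (Fin.castSucc i) ^ 2) / (4 * θ (Fin.last k))

/-- The Fisher information metric of the spherical normal family in natural parameters:
the Hessian `g_{ij}(θ) = ∂²ψ/∂θ_i∂θ_j`. -/
noncomputable def gSph (k : ℕ) (θ : Fin (k + 1) → ℝ) :
    Matrix (Fin (k + 1)) (Fin (k + 1)) ℝ :=
  Matrix.of fun i j => pd i (pd j (psiSph k)) θ

/-- The mixed partial derivative along a list of coordinate indices; for the natural
exponential family, `κ_{i_1...i_r}(θ) = ∂^r ψ/∂θ_{i_1}⋯∂θ_{i_r}` is the cumulant. -/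
noncomputable def lderiv {d : ℕ} (l : List (Fin d)) (f : (Fin d → ℝ) → ℝ) :
    (Fin d → ℝ) → ℝ :=
  l.foldr (fun i g => pd i g) f

/-! Write `t = θ_d` and let `τ` be the differential of `log |t|`. Up to a linear term,
`ψ = -((d-1)/2) log(-2t) - |θ|²/(4t)`, where `|θ|²` now includes `t²`. The second summand is
homogeneous of degree one, so its Hessian `h` satisfies `hθ = 0` by Euler's identity, and
`g = h + ((d-1)/2) τ ⊗ τ`. Since `∂_l τ_i = -τ_l τ_i` and
`∂_l h_ij = -(h_ij τ_l + h_li τ_j + h_lj τ_i)`, every higher cumulant is a symmetrised product of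
copies of `h` and `τ`. The vector dual to `τ` under `g` is a multiple of `θ`, hence is killed by
`h`, and `h g⁻¹` is the projection `1 - τ ⊗ θ` of trace `d - 1`. Every contraction is therefore a
polynomial in the two numbers `tr (h g⁻¹) = d - 1` and `g⁻¹(τ, τ) = 2/(d-1)`. -/

section Contraction

variable {ι R : Type*} [CommSemiring R]

/-- The symmetric 3-tensor `3a Sym(h ⊗ τ) + b τ ⊗ τ ⊗ τ` for a symmetric form `h` and a
covector `τ`; the third cumulants have this shape. -/
def cubicTensor (a b : R) (h : Matrix ι ι R) (τ : ι → R) (i j l : ι) : R :=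
  a * (h i j * τ l + h i l * τ j + h j l * τ i) + b * (τ i * τ j * τ l)

/-- The symmetric 4-tensor `6a Sym(h ⊗ τ ⊗ τ) + b τ ⊗ τ ⊗ τ ⊗ τ` for a symmetric form `h` and a
covector `τ`; the fourth cumulants have this shape. -/
def quarticTensor (a b : R) (h : Matrix ι ι R) (τ : ι → R) (i j l m : ι) : R :=
  a * (h i j * (τ l * τ m) + h i l * (τ j * τ m) + h i m * (τ j * τ l) +
      h j l * (τ i * τ m) + h j m * (τ i * τ l) + h l m * (τ i * τ j)) +
    b * (τ i * τ j * τ l * τ m)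

variable (a b : R) {h G A : Matrix ι ι R} {τ u : ι → R}

theorem cubicTensor_swap (hh : h.IsSymm) (i j l : ι) :
    cubicTensor a b h τ i j l = cubicTensor a b h τ i l j := by
  rw [cubicTensor, cubicTensor, hh.apply j l]
  ring

theorem cubicTensor_rotate (hh : h.IsSymm) (i j l : ι) :
    cubicTensor a b h τ i j l = cubicTensor a b h τ j l i := by
  rw [cubicTensor, cubicTensor, hh.apply i j, hh.apply i l]
  ring

variable [Fintype ι]

theorem sum_mul_mul_eq_dotProduct_mulVec :
    ∑ i, ∑ j, τ i * u j * G i j = τ ⬝ᵥ (G *ᵥ u) := by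
  simp only [mulVec, dotProduct, Finset.mul_sum, mul_assoc, mul_comm (G _ _)]

theorem sum_mul_add_mul_mul (hG : G.IsSymm) :
    ∑ i, ∑ j, (a * h i j + b * (τ i * τ j)) * G i j =
      a * trace (h * G) + b * (τ ⬝ᵥ (G *ᵥ τ)) := by
  have htrace : ∑ i, ∑ j, h i j * G i j = trace (h * G) := by
    simpa only [hG.eq, hadamard_apply] using sum_hadamard_eq h G
  rw [← htrace, ← sum_mul_mul_eq_dotProduct_mulVec]
  simp only [add_mul, mul_assoc, Finset.sum_add_distrib, Finset.mul_sum]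

theorem sum_quarticTensor_mul (hG : G.IsSymm) (hτ : h *ᵥ (G *ᵥ τ) = 0) (i j : ι) :
    ∑ l, ∑ m, quarticTensor a b h τ i j l m * G l m =
      a * (τ ⬝ᵥ (G *ᵥ τ)) * h i j +
        (a * trace (h * G) + b * (τ ⬝ᵥ (G *ᵥ τ))) * (τ i * τ j) := by
  have cross (p : ι) : ∑ l, ∑ m, h p l * τ m * G l m = 0 :=
    sum_mul_mul_eq_dotProduct_mulVec.trans (congrFun hτ p)
  have cross' (p : ι) : ∑ l, ∑ m, h p m * τ l * G l m = 0 := by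
    rw [← cross p, Finset.sum_comm]
    simp only [hG.apply]
  calc
    _ = (h i j * a) * (∑ l, ∑ m, τ l * τ m * G l m) +
          a * (τ j * (∑ l, ∑ m, h i l * τ m * G l m) + τ j * (∑ l, ∑ m, h i m * τ l * G l m) +
            τ i * (∑ l, ∑ m, h j l * τ m * G l m) + τ i * (∑ l, ∑ m, h j m * τ l * G l m)) +
          τ i * τ j * ∑ l, ∑ m, (a * h l m + b * (τ l * τ m)) * G l m := by
      simp only [quarticTensor, Finset.mul_sum, ← Finset.sum_add_distrib]
      exact Finset.sum_congr rfl fun l _ => Finset.sum_congr rfl fun m _ => by ring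
    _ = _ := by
      rw [cross, cross, cross', cross', sum_mul_add_mul_mul a b hG,
        sum_mul_mul_eq_dotProduct_mulVec]
      ring

theorem sum_quarticTensor_mul_mul (hG : G.IsSymm) (hτ : h *ᵥ (G *ᵥ τ) = 0) :
    ∑ i, ∑ j, ∑ l, ∑ m, quarticTensor a b h τ i j l m * G i j * G l m =
      2 * a * trace (h * G) * (τ ⬝ᵥ (G *ᵥ τ)) + b * (τ ⬝ᵥ (G *ᵥ τ)) ^ 2 := by
  calc
    _ = ∑ i, ∑ j, (∑ l, ∑ m, quarticTensor a b h τ i j l m * G l m) * G i j := by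
      simp only [Finset.sum_mul, mul_right_comm]
    _ = _ := by
      simp only [sum_quarticTensor_mul a b hG hτ, sum_mul_add_mul_mul _ _ hG]
      ring

theorem sum_cubicTensor_mul (hG : G.IsSymm) (hτ : h *ᵥ (G *ᵥ τ) = 0) (i : ι) :
    ∑ j, ∑ l, cubicTensor a b h τ i j l * G j l =
      (a * trace (h * G) + b * (τ ⬝ᵥ (G *ᵥ τ))) * τ i := by
  have cross : ∑ j, ∑ l, h i j * τ l * G j l = 0 :=
    sum_mul_mul_eq_dotProduct_mulVec.trans (congrFun hτ i)
  have cross' : ∑ j, ∑ l, h i l * τ j * G j l = 0 := by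
    rw [← cross, Finset.sum_comm]
    simp only [hG.apply]
  calc
    _ = a * (∑ j, ∑ l, h i j * τ l * G j l) + a * (∑ j, ∑ l, h i l * τ j * G j l) +
          τ i * ∑ j, ∑ l, (a * h j l + b * (τ j * τ l)) * G j l := by
      simp only [cubicTensor, Finset.mul_sum, ← Finset.sum_add_distrib]
      exact Finset.sum_congr rfl fun j _ => Finset.sum_congr rfl fun l _ => by ring
    _ = _ := by
      rw [cross, cross', sum_mul_add_mul_mul a b hG]
      ring

theorem sum_cubicTensor_mul_mul (hG : G.IsSymm) (hu : h *ᵥ u = 0) :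
    ∑ i, ∑ j, ∑ l, cubicTensor a b h τ i j l * G i j * u l =
      (τ ⬝ᵥ u) * (a * trace (h * G) + b * (τ ⬝ᵥ (G *ᵥ τ))) := by
  have contract_last (i j : ι) : ∑ l, cubicTensor a b h τ i j l * u l =
      (τ ⬝ᵥ u) * (a * h i j + b * (τ i * τ j)) := calc
    _ = (τ ⬝ᵥ u) * (a * h i j + b * (τ i * τ j)) +
          a * (τ j * (h *ᵥ u) i + τ i * (h *ᵥ u) j) := by
      simp only [cubicTensor, mulVec, dotProduct, Finset.mul_sum, Finset.sum_mul,
        ← Finset.sum_add_distrib]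
      exact Finset.sum_congr rfl fun l _ => by ring
    _ = _ := by simp only [hu, Pi.zero_apply, mul_zero, add_zero]
  simp only [mul_right_comm _ (G _ _), ← Finset.sum_mul, contract_last]
  simp only [mul_assoc, ← Finset.mul_sum, ← sum_mul_add_mul_mul a b hG]

theorem sum_cubicTensor_mul_cubicTensor_mul_chain (hG : G.IsSymm) (hτ : h *ᵥ (G *ᵥ τ) = 0) :
    ∑ i₁, ∑ i₂, ∑ i₃, ∑ i₄, ∑ i₅, ∑ i₆, cubicTensor a b h τ i₁ i₂ i₃ *
        cubicTensor a b h τ i₄ i₅ i₆ * G i₁ i₂ * G i₃ i₄ * G i₅ i₆ =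
      (a * trace (h * G) + b * (τ ⬝ᵥ (G *ᵥ τ))) ^ 2 * (τ ⬝ᵥ (G *ᵥ τ)) := by
  calc
    _ = ∑ i₁, ∑ i₂, ∑ i₃, cubicTensor a b h τ i₁ i₂ i₃ * G i₁ i₂ * (∑ i₄, G i₃ i₄ *
          ∑ i₅, ∑ i₆, cubicTensor a b h τ i₄ i₅ i₆ * G i₅ i₆) := by
      simp only [Finset.mul_sum]
      congr! 6
      ring
    _ = (a * trace (h * G) + b * (τ ⬝ᵥ (G *ᵥ τ))) *
          ∑ i₁, ∑ i₂, ∑ i₃, cubicTensor a b h τ i₁ i₂ i₃ * G i₁ i₂ * (G *ᵥ τ) i₃ := by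
      simp only [sum_cubicTensor_mul a b hG hτ, mulVec, dotProduct, Finset.mul_sum]
      congr! 4
      ring
    _ = _ := by
      rw [sum_cubicTensor_mul_mul a b hG hτ]
      ring

theorem sum_cubicTensor_mul_mul_mul {κ : Type*} (P : Matrix κ ι R) (i j l : κ) :
    ∑ p, ∑ q, ∑ r, cubicTensor a b h τ p q r * P i p * P j q * P l r =
      cubicTensor a b (P * h * Pᵀ) (P *ᵥ τ) i j l := by
  have hform (i j : κ) : (P * h * Pᵀ) i j = ∑ p, ∑ q, h p q * P i p * P j q := by
    simp only [mul_apply, transpose_apply, Finset.sum_mul]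
    rw [Finset.sum_comm]
    simp only [mul_comm (h _ _)]
  have hvec (i : κ) : (P *ᵥ τ) i = ∑ p, τ p * P i p := by
    simp only [mulVec, dotProduct, mul_comm]
  have h₁₂ : (P * h * Pᵀ) i j * (P *ᵥ τ) l =
      ∑ p, ∑ q, ∑ r, h p q * τ r * P i p * P j q * P l r := by
    simp only [hform, hvec, Finset.sum_mul]
    simp only [Finset.mul_sum]
    congr! 3
    ring
  have h₁₃ : (P * h * Pᵀ) i l * (P *ᵥ τ) j =
      ∑ p, ∑ q, ∑ r, h p r * τ q * P i p * P j q * P l r := by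
    rw [hform, hvec, Finset.sum_mul]
    simp only [mul_comm _ (∑ q, τ q * P j q), Finset.sum_mul_sum]
    congr! 3
    ring
  have h₂₃ : (P * h * Pᵀ) j l * (P *ᵥ τ) i =
      ∑ p, ∑ q, ∑ r, h q r * τ p * P i p * P j q * P l r := by
    rw [hform, hvec, mul_comm, Finset.sum_mul]
    simp only [Finset.mul_sum]
    congr! 3
    ring
  have hcube : (P *ᵥ τ) i * (P *ᵥ τ) j * (P *ᵥ τ) l =
      ∑ p, ∑ q, ∑ r, τ p * τ q * τ r * P i p * P j q * P l r := by
    rw [hvec i, hvec j, hvec l, Finset.sum_mul_sum, Finset.sum_mul]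
    simp only [Finset.sum_mul_sum]
    congr! 3
    ring
  simp only [cubicTensor, h₁₂, h₁₃, h₂₃, hcube, Finset.mul_sum, ← Finset.sum_add_distrib]
  congr! 3
  ring

theorem sum_cubicTensor_mul_cube (hu : h *ᵥ u = 0) :
    ∑ i, ∑ j, ∑ l, cubicTensor a b h τ i j l * (u i * u j * u l) = b * (τ ⬝ᵥ u) ^ 3 := by
  have huu : (vecMulVec u u).IsSymm := transpose_vecMulVec u u
  calc
    _ = ∑ i, ∑ j, ∑ l, cubicTensor a b h τ i j l * vecMulVec u u i j * u l := by
      simp only [vecMulVec_apply, mul_assoc]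
    _ = (τ ⬝ᵥ u) * (a * trace (vecMulVec (h *ᵥ u) u) + b * (τ ⬝ᵥ (vecMulVec u u *ᵥ τ))) := by
      rw [sum_cubicTensor_mul_mul a b huu hu, mul_vecMulVec]
    _ = _ := by
      rw [hu, zero_vecMulVec, trace_zero, vecMulVec_mulVec, op_smul_eq_smul, dotProduct_smul,
        smul_eq_mul, dotProduct_comm u]
      ring

theorem sum_cubicTensor_mul_cubicTensor (c d : R) (hh : h.IsSymm) (hA : A.IsSymm)
    (hu : h *ᵥ u = 0) (hAτ : A *ᵥ τ = 0) :
    ∑ i, ∑ j, ∑ l, cubicTensor a b h τ i j l * cubicTensor c d A u i j l =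
      3 * a * c * trace (h * A) * (τ ⬝ᵥ u) + b * d * (τ ⬝ᵥ u) ^ 3 := by
  have h₁₂ : ∑ i, ∑ j, ∑ l, cubicTensor a b h τ i j l * A i j * u l =
      (τ ⬝ᵥ u) * (a * trace (h * A)) := by
    rw [sum_cubicTensor_mul_mul a b hA hu, hAτ, dotProduct_zero, mul_zero, add_zero]
  have h₁₃ : ∑ i, ∑ j, ∑ l, cubicTensor a b h τ i j l * A i l * u j =
      (τ ⬝ᵥ u) * (a * trace (h * A)) := by
    rw [← h₁₂]
    refine Finset.sum_congr rfl fun i _ => ?_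
    rw [Finset.sum_comm]
    simp only [cubicTensor_swap a b hh i]
  have h₂₃ : ∑ i, ∑ j, ∑ l, cubicTensor a b h τ i j l * A j l * u i =
      (τ ⬝ᵥ u) * (a * trace (h * A)) := by
    rw [← h₁₂, Finset.sum_comm]
    refine Finset.sum_congr rfl fun j _ => ?_
    rw [Finset.sum_comm]
    simp only [cubicTensor_rotate a b hh _ j]
  calc
    _ = c * ((∑ i, ∑ j, ∑ l, cubicTensor a b h τ i j l * A i j * u l) +
          (∑ i, ∑ j, ∑ l, cubicTensor a b h τ i j l * A i l * u j) +
          ∑ i, ∑ j, ∑ l, cubicTensor a b h τ i j l * A j l * u i) +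
        d * ∑ i, ∑ j, ∑ l, cubicTensor a b h τ i j l * (u i * u j * u l) := by
      simp only [cubicTensor.eq_def c d, Finset.mul_sum, ← Finset.sum_add_distrib]
      congr! 3
      ring
    _ = _ := by
      rw [h₁₂, h₁₃, h₂₃, sum_cubicTensor_mul_cube a b hu]
      ring

theorem sum_cubicTensor_mul_cubicTensor_mul_full (hG : G.IsSymm) (hh : h.IsSymm)
    (hτ : h *ᵥ (G *ᵥ τ) = 0) :
    ∑ i₁, ∑ i₂, ∑ i₃, ∑ i₄, ∑ i₅, ∑ i₆, cubicTensor a b h τ i₁ i₂ i₃ *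
        cubicTensor a b h τ i₄ i₅ i₆ * G i₁ i₄ * G i₂ i₅ * G i₃ i₆ =
      3 * a ^ 2 * trace (h * G * (h * G)) * (τ ⬝ᵥ (G *ᵥ τ)) + b ^ 2 * (τ ⬝ᵥ (G *ᵥ τ)) ^ 3 := by
  have hGhG : (G * h * Gᵀ).IsSymm := by
    rw [IsSymm, transpose_mul, transpose_mul, transpose_transpose, hh.eq, Matrix.mul_assoc]
  have hker : (G * h * Gᵀ) *ᵥ τ = 0 := by
    rw [hG.eq, ← mulVec_mulVec, ← mulVec_mulVec, hτ, mulVec_zero]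
  calc
    _ = ∑ i₁, ∑ i₂, ∑ i₃, cubicTensor a b h τ i₁ i₂ i₃ *
          cubicTensor a b (G * h * Gᵀ) (G *ᵥ τ) i₁ i₂ i₃ := by
      simp only [← sum_cubicTensor_mul_mul_mul]
      simp only [Finset.mul_sum, mul_assoc]
    _ = _ := by
      rw [sum_cubicTensor_mul_cubicTensor a b a b hh hGhG hτ hker, hG.eq]
      simp only [Matrix.mul_assoc]
      ring

end Contraction

section PartialDeriv

variable {d : ℕ} {i : Fin d} {f g : (Fin d → ℝ) → ℝ} {f' g' : ℝ} {x : Fin d → ℝ}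

/-- `f` is differentiable at `x` with `i`-th partial derivative `f'`. Differentiability is part of
the notion because `pd`, like `fderiv`, takes a junk value without it. -/
def HasPartialDerivAt (i : Fin d) (f : (Fin d → ℝ) → ℝ) (f' : ℝ) (x : Fin d → ℝ) : Prop :=
  DifferentiableAt ℝ f x ∧ pd i f x = f'

namespace HasPartialDerivAt

theorem congr_deriv (hf : HasPartialDerivAt i f f' x) (h : f' = g') :
    HasPartialDerivAt i f g' x := h ▸ hf

theorem add (hf : HasPartialDerivAt i f f' x) (hg : HasPartialDerivAt i g g' x) :
    HasPartialDerivAt i (fun y => f y + g y) (f' + g') x :=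
  ⟨hf.1.add hg.1, by simp [pd, fderiv_fun_add hf.1 hg.1, ← hf.2, ← hg.2]⟩

theorem const_add (c : ℝ) (hf : HasPartialDerivAt i f f' x) :
    HasPartialDerivAt i (fun y => c + f y) f' x :=
  ⟨hf.1.const_add c, by simp [pd, fderiv_const_add, ← hf.2]⟩

theorem mul (hf : HasPartialDerivAt i f f' x) (hg : HasPartialDerivAt i g g' x) :
    HasPartialDerivAt i (fun y => f y * g y) (f' * g x + f x * g') x :=
  ⟨hf.1.mul hg.1, by simp [pd, fderiv_fun_mul hf.1 hg.1, ← hf.2, ← hg.2, mul_comm, add_comm]⟩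

theorem const_mul (c : ℝ) (hf : HasPartialDerivAt i f f' x) :
    HasPartialDerivAt i (fun y => c * f y) (c * f') x :=
  ⟨hf.1.const_mul c, by simp [pd, fderiv_const_mul hf.1 c, ← hf.2]⟩

theorem comp {φ : ℝ → ℝ} {φ' : ℝ} (hf : HasPartialDerivAt i f f' x) (hφ : HasDerivAt φ φ' (f x)) :
    HasPartialDerivAt i (fun y => φ (f y)) (φ' * f') x := by
  have h : HasFDerivAt (fun y => φ (f y)) (φ' • fderiv ℝ f x) x :=
    hφ.comp_hasFDerivAt x hf.1.hasFDerivAt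
  exact ⟨h.differentiableAt, by simp [pd, h.fderiv, ← hf.2]⟩

theorem sum {ι : Type*} {s : Finset ι} {f : ι → (Fin d → ℝ) → ℝ} {f' : ι → ℝ}
    (hf : ∀ j ∈ s, HasPartialDerivAt i (f j) (f' j) x) :
    HasPartialDerivAt i (fun y => ∑ j ∈ s, f j y) (∑ j ∈ s, f' j) x :=
  ⟨.fun_sum fun j hj => (hf j hj).1, by
    rw [pd, fderiv_fun_sum fun j hj => (hf j hj).1, _root_.sum_apply]
    exact Finset.sum_congr rfl fun j hj => (hf j hj).2⟩

end HasPartialDerivAt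

theorem hasPartialDerivAt_apply (i j : Fin d) (x : Fin d → ℝ) :
    HasPartialDerivAt i (fun y => y j) ((1 : Matrix (Fin d) (Fin d) ℝ) i j) x := by
  refine ⟨differentiableAt_apply j x, ?_⟩
  have h := hasFDerivAt_apply (𝕜 := ℝ) (F' := fun _ => ℝ) j x
  rw [pd, h.fderiv]
  simp [Matrix.one_apply, Pi.single_apply, eq_comm]

theorem hasPartialDerivAt_dotProduct_self (i : Fin d) (x : Fin d → ℝ) :
    HasPartialDerivAt i (fun y => y ⬝ᵥ y) (2 * x i) x := by
  refine (HasPartialDerivAt.sum fun j _ =>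
    (hasPartialDerivAt_apply i j x).mul (hasPartialDerivAt_apply i j x)).congr_deriv ?_
  simp [Matrix.one_apply, Finset.sum_add_distrib, two_mul]

theorem eqOn_pd {h : (Fin d → ℝ) → ℝ} {U : Set (Fin d → ℝ)} (hU : IsOpen U)
    (hfg : U.EqOn f g) (hg : ∀ x ∈ U, HasPartialDerivAt i g (h x) x) :
    U.EqOn (pd i f) h := fun x hx => by
  rw [← (hg x hx).2, pd, pd, (hfg.eventuallyEq_of_mem (hU.mem_nhds hx)).fderiv_eq]

end PartialDeriv

section Metric

variable {d : ℕ} (o : Fin d) {θ : Fin d → ℝ}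

/-- The differential of `log |θ_o|`. -/
noncomputable def logCovector (θ : Fin d → ℝ) : Fin d → ℝ := Pi.single o (θ o)⁻¹

/-- The Hessian of `-|θ|² / (4θ_o)`, the perspective of a multiple of the squared norm. That
function is homogeneous of degree one, so by Euler's identity `θ` lies in the kernel. -/
noncomputable def perspectiveHessian (θ : Fin d → ℝ) : Matrix (Fin d) (Fin d) ℝ :=
  -(2 * θ o)⁻¹ • (1 - vecMulVec θ (logCovector o θ) - vecMulVec (logCovector o θ) θ +
    (θ ⬝ᵥ θ) • vecMulVec (logCovector o θ) (logCovector o θ))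

variable {o}

theorem logCovector_dotProduct_self (hθ : θ o ≠ 0) : logCovector o θ ⬝ᵥ θ = 1 := by
  simp [logCovector, hθ]

theorem one_apply_eq_mul_logCovector (hθ : θ o ≠ 0) (i : Fin d) :
    (1 : Matrix (Fin d) (Fin d) ℝ) i o = θ o * logCovector o θ i := by
  rcases eq_or_ne i o with rfl | hi <;> simp [logCovector, *]

theorem perspectiveHessian_apply (i j : Fin d) : perspectiveHessian o θ i j =
    -(1 / 2) * (θ o)⁻¹ * ((1 : Matrix (Fin d) (Fin d) ℝ) i j +
      -1 * (θ i * logCovector o θ j + logCovector o θ i * θ j) +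
      θ ⬝ᵥ θ * (logCovector o θ i * logCovector o θ j)) := by
  simp only [perspectiveHessian, Matrix.smul_apply, Matrix.add_apply, Matrix.sub_apply,
    vecMulVec_apply, smul_eq_mul]
  ring

theorem perspectiveHessian_isSymm : (perspectiveHessian o θ).IsSymm := by
  ext i j
  simp only [transpose_apply, perspectiveHessian_apply, isSymm_one.apply i j]
  ring

theorem perspectiveHessian_mulVec_self (hθ : θ o ≠ 0) : perspectiveHessian o θ *ᵥ θ = 0 := by
  rw [perspectiveHessian, smul_mulVec]
  simp [add_mulVec, sub_mulVec, smul_mulVec, vecMulVec_mulVec, logCovector_dotProduct_self hθ]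

theorem hasPartialDerivAt_inv_apply (hθ : θ o ≠ 0) (l : Fin d) :
    HasPartialDerivAt l (fun y => (y o)⁻¹) (-(θ o)⁻¹ * logCovector o θ l) θ := by
  refine ((hasPartialDerivAt_apply l o θ).comp (hasDerivAt_inv hθ)).congr_deriv ?_
  rw [one_apply_eq_mul_logCovector hθ]
  field_simp

theorem hasPartialDerivAt_logCovector (hθ : θ o ≠ 0) (l i : Fin d) :
    HasPartialDerivAt l (fun y => logCovector o y i)
      (-(logCovector o θ l * logCovector o θ i)) θ := by
  have hτ (y : Fin d → ℝ) : logCovector o y i = (1 : Matrix (Fin d) (Fin d) ℝ) i o * (y o)⁻¹ := by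
    simp [logCovector, Pi.single_apply, Matrix.one_apply]
  simp only [hτ]
  refine ((hasPartialDerivAt_inv_apply hθ l).const_mul _).congr_deriv ?_
  ring

theorem hasPartialDerivAt_perspectiveHessian (hθ : θ o ≠ 0) (l i j : Fin d) :
    HasPartialDerivAt l (fun y => perspectiveHessian o y i j)
      (cubicTensor (-1) 0 (perspectiveHessian o θ) (logCovector o θ) l i j) θ := by
  have hcoord := hasPartialDerivAt_apply l (x := θ)
  have hτ := hasPartialDerivAt_logCovector hθ l
  simp only [perspectiveHessian_apply]
  refine (((hasPartialDerivAt_inv_apply hθ l).const_mul (-(1 / 2))).mul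
    (((((((hcoord i).mul (hτ j)).add ((hτ i).mul (hcoord j))).const_mul (-1)).const_add _).add
      ((hasPartialDerivAt_dotProduct_self l θ).mul ((hτ i).mul (hτ j)))))).congr_deriv ?_
  simp only [cubicTensor, perspectiveHessian_apply]
  ring

/-- The inverse of the metric `perspectiveHessian o θ + c τ τᵀ`, where `τ = logCovector o θ`. -/
noncomputable def inverseMetric (o : Fin d) (c : ℝ) (θ : Fin d → ℝ) : Matrix (Fin d) (Fin d) ℝ :=
  c⁻¹ • vecMulVec θ θ -
    (2 * θ o) • (1 - θ o ^ 2 • vecMulVec (logCovector o θ) (logCovector o θ))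

theorem inverseMetric_isSymm (c : ℝ) : (inverseMetric o c θ).IsSymm := by
  simp [IsSymm, inverseMetric, transpose_vecMulVec]

theorem logCovector_dotProduct_logCovector :
    logCovector o θ ⬝ᵥ logCovector o θ = (θ o ^ 2)⁻¹ := by
  simp [logCovector, sq]

theorem inverseMetric_mulVec_logCovector (c : ℝ) (hθ : θ o ≠ 0) :
    inverseMetric o c θ *ᵥ logCovector o θ = c⁻¹ • θ := by
  simp only [inverseMetric, sub_mulVec, smul_mulVec, one_mulVec, vecMulVec_mulVec, op_smul_eq_smul,
    logCovector_dotProduct_logCovector, dotProduct_comm θ, logCovector_dotProduct_self hθ]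
  match_scalars <;> field_simp
  ring

theorem perspectiveHessian_mul_inverseMetric (c : ℝ) (hθ : θ o ≠ 0) :
    perspectiveHessian o θ * inverseMetric o c θ = 1 - vecMulVec (logCovector o θ) θ := by
  have hτ : perspectiveHessian o θ *ᵥ logCovector o θ =
      (2 * θ o ^ 3)⁻¹ • (θ - (θ ⬝ᵥ θ) • logCovector o θ) := by
    rw [perspectiveHessian, smul_mulVec]
    simp only [add_mulVec, sub_mulVec, smul_mulVec, one_mulVec, vecMulVec_mulVec, op_smul_eq_smul,
      logCovector_dotProduct_logCovector, dotProduct_comm θ, logCovector_dotProduct_self hθ]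
    module
  calc
    _ = -(2 * θ o) • (perspectiveHessian o θ -
          θ o ^ 2 • vecMulVec (perspectiveHessian o θ *ᵥ logCovector o θ) (logCovector o θ)) := by
      simp [inverseMetric, Matrix.mul_sub, mul_vecMulVec, perspectiveHessian_mulVec_self hθ]
    _ = _ := by
      rw [hτ, smul_vecMulVec, sub_vecMulVec, smul_vecMulVec, perspectiveHessian]
      match_scalars <;> field_simp <;> ring

theorem inv_perspectiveHessian_add {c : ℝ} (hc : c ≠ 0) (hθ : θ o ≠ 0) :
    (perspectiveHessian o θ + c • vecMulVec (logCovector o θ) (logCovector o θ))⁻¹ =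
      inverseMetric o c θ := by
  refine inv_eq_right_inv ?_
  have hvec : logCovector o θ ᵥ* inverseMetric o c θ = c⁻¹ • θ := by
    rw [← mulVec_transpose, (inverseMetric_isSymm c).eq, inverseMetric_mulVec_logCovector c hθ]
  rw [Matrix.add_mul, perspectiveHessian_mul_inverseMetric c hθ, smul_mul_assoc, vecMulVec_mul,
    hvec, vecMulVec_smul, smul_smul, mul_inv_cancel₀ hc, one_smul, sub_add_cancel]

theorem logCovector_dotProduct_inverseMetric_mulVec (c : ℝ) (hθ : θ o ≠ 0) :
    logCovector o θ ⬝ᵥ (inverseMetric o c θ *ᵥ logCovector o θ) = c⁻¹ := by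
  rw [inverseMetric_mulVec_logCovector c hθ, dotProduct_smul, logCovector_dotProduct_self hθ,
    smul_eq_mul, mul_one]

theorem perspectiveHessian_mulVec_inverseMetric_mulVec (c : ℝ) (hθ : θ o ≠ 0) :
    perspectiveHessian o θ *ᵥ (inverseMetric o c θ *ᵥ logCovector o θ) = 0 := by
  rw [inverseMetric_mulVec_logCovector c hθ, mulVec_smul, perspectiveHessian_mulVec_self hθ,
    smul_zero]

theorem trace_perspectiveHessian_mul_inverseMetric (c : ℝ) (hθ : θ o ≠ 0) :
    trace (perspectiveHessian o θ * inverseMetric o c θ) = d - 1 := by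
  rw [perspectiveHessian_mul_inverseMetric c hθ, trace_sub, trace_one, trace_vecMulVec,
    logCovector_dotProduct_self hθ, Fintype.card_fin]

theorem isIdempotentElem_perspectiveHessian_mul_inverseMetric (c : ℝ) (hθ : θ o ≠ 0) :
    IsIdempotentElem (perspectiveHessian o θ * inverseMetric o c θ) := by
  rw [perspectiveHessian_mul_inverseMetric c hθ]
  refine IsIdempotentElem.one_sub ?_
  rw [IsIdempotentElem, vecMulVec_mul_vecMulVec, dotProduct_comm, logCovector_dotProduct_self hθ,
    one_smul]

end Metric

section Spherical

variable {k : ℕ} {θ : Fin (k + 1) → ℝ}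

theorem isOpen_setOf_last_ne_zero (k : ℕ) : IsOpen {θ : Fin (k + 1) → ℝ | θ (Fin.last k) ≠ 0} :=
  isOpen_ne_fun (continuous_apply _) continuous_const

theorem psiSph_eq (hθ : θ (Fin.last k) ≠ 0) :
    psiSph k θ = -(k / 2) * Real.log (-2 * θ (Fin.last k)) +
      (-(1 / 4) * ((θ (Fin.last k))⁻¹ * (θ ⬝ᵥ θ)) + 1 / 4 * θ (Fin.last k)) := by
  rw [psiSph, dotProduct, Fin.sum_univ_castSucc]
  field_simp
  ring

/-- The `i`-th component of the gradient of `psiSph k` off the hyperplane `θ_d = 0`. -/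
noncomputable def gradPsiSph (k : ℕ) (i : Fin (k + 1)) (θ : Fin (k + 1) → ℝ) : ℝ :=
  1 / 4 * (1 : Matrix (Fin (k + 1)) (Fin (k + 1)) ℝ) i (Fin.last k) +
    (-(k / 2) * logCovector (Fin.last k) θ i + (-(1 / 2) * ((θ (Fin.last k))⁻¹ * θ i) +
      1 / 4 * ((θ ⬝ᵥ θ) * ((θ (Fin.last k))⁻¹ * logCovector (Fin.last k) θ i))))

theorem pd_psiSph (i : Fin (k + 1)) :
    {θ | θ (Fin.last k) ≠ 0}.EqOn (pd i (psiSph k)) (gradPsiSph k i) := by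
  refine eqOn_pd (isOpen_setOf_last_ne_zero k) (fun θ hθ => psiSph_eq hθ)
    fun θ (hθ : θ (Fin.last k) ≠ 0) => ?_
  have hcoord := hasPartialDerivAt_apply i (Fin.last k) θ
  have hlog : HasDerivAt (fun t : ℝ => Real.log (-2 * t)) (θ (Fin.last k))⁻¹ (θ (Fin.last k)) := by
    refine (((hasDerivAt_id _).const_mul (-2)).log (by simpa using hθ)).congr_deriv ?_
    field_simp
  refine (((hcoord.comp hlog).const_mul _).add ((((hasPartialDerivAt_inv_apply hθ i).mul
    (hasPartialDerivAt_dotProduct_self i θ)).const_mul _).add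
      (hcoord.const_mul _))).congr_deriv ?_
  simp only [one_apply_eq_mul_logCovector hθ, gradPsiSph]
  field_simp
  ring

theorem lderiv_two_psiSph (i j : Fin (k + 1)) :
    {θ | θ (Fin.last k) ≠ 0}.EqOn (lderiv [i, j] (psiSph k)) fun θ =>
      perspectiveHessian (Fin.last k) θ i j +
        k / 2 * (logCovector (Fin.last k) θ i * logCovector (Fin.last k) θ j) := by
  refine eqOn_pd (isOpen_setOf_last_ne_zero k) (pd_psiSph j)
    fun θ (hθ : θ (Fin.last k) ≠ 0) => ?_
  have hτ := hasPartialDerivAt_logCovector hθ i j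
  have hinv := hasPartialDerivAt_inv_apply hθ i
  refine (((hτ.const_mul _).add (((hinv.mul (hasPartialDerivAt_apply i j θ)).const_mul _).add
    (((hasPartialDerivAt_dotProduct_self i θ).mul (hinv.mul hτ)).const_mul _))).const_add
      _).congr_deriv ?_
  simp only [perspectiveHessian_apply]
  ring

theorem lderiv_three_psiSph (i j l : Fin (k + 1)) :
    {θ | θ (Fin.last k) ≠ 0}.EqOn (lderiv [i, j, l] (psiSph k)) fun θ =>
      cubicTensor (-1) (-k) (perspectiveHessian (Fin.last k) θ) (logCovector (Fin.last k) θ)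
        i j l := by
  refine eqOn_pd (isOpen_setOf_last_ne_zero k) (lderiv_two_psiSph j l) fun θ hθ => ?_
  have hτ := hasPartialDerivAt_logCovector hθ i
  refine ((hasPartialDerivAt_perspectiveHessian hθ i j l).add
    (((hτ j).mul (hτ l)).const_mul _)).congr_deriv ?_
  simp only [cubicTensor]
  ring

theorem lderiv_four_psiSph (i j l m : Fin (k + 1)) :
    {θ | θ (Fin.last k) ≠ 0}.EqOn (lderiv [i, j, l, m] (psiSph k)) fun θ =>
      quarticTensor 2 (3 * k) (perspectiveHessian (Fin.last k) θ) (logCovector (Fin.last k) θ)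
        i j l m := by
  refine eqOn_pd (isOpen_setOf_last_ne_zero k) (lderiv_three_psiSph j l m) fun θ hθ => ?_
  have hτ := hasPartialDerivAt_logCovector hθ i
  have hh := hasPartialDerivAt_perspectiveHessian hθ i
  refine ((((((hh j l).mul (hτ m)).add ((hh j m).mul (hτ l))).add
    ((hh l m).mul (hτ j))).const_mul _).add
      ((((hτ j).mul (hτ l)).mul (hτ m)).const_mul _)).congr_deriv ?_
  simp only [cubicTensor, quarticTensor]
  ring

theorem gSph_inv (hk : k ≠ 0) (hθ : θ (Fin.last k) ≠ 0) :
    (gSph k θ)⁻¹ = inverseMetric (Fin.last k) (k / 2) θ := by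
  rw [← inv_perspectiveHessian_add (by positivity) hθ]
  congr 1
  ext i j
  exact lderiv_two_psiSph i j hθ

end Spherical

/-- For the spherical normal model with unknown variance of dimension
`d = k + 1 ≥ 2`, the three cumulant contractions appearing in the first-order term take the
constant values `(8d+4)/(d-1)`, `(2d²+4d+2)/(d-1)` and `(6d+2)/(d-1)` respectively, so that
`F₁ = (1/8)(8d+4)/(d-1) - (1/8)(2d²+4d+2)/(d-1) - (1/12)(6d+2)/(d-1)
   = (1-3d²)/(12(d-1))`. -/
theorem stmt_18 (k : ℕ) (hk : 1 ≤ k) (θ : Fin (k + 1) → ℝ)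
    (hθ : θ (Fin.last k) < 0) :
    (∑ i₁, ∑ i₂, ∑ i₃, ∑ i₄,
        lderiv [i₁, i₂, i₃, i₄] (psiSph k) θ * (gSph k θ)⁻¹ i₁ i₂ * (gSph k θ)⁻¹ i₃ i₄ =
      (8 * ((k : ℝ) + 1) + 4) / (k : ℝ)) ∧
    (∑ i₁, ∑ i₂, ∑ i₃, ∑ i₄, ∑ i₅, ∑ i₆,
        lderiv [i₁, i₂, i₃] (psiSph k) θ * lderiv [i₄, i₅, i₆] (psiSph k) θ *
          (gSph k θ)⁻¹ i₁ i₂ * (gSph k θ)⁻¹ i₃ i₄ * (gSph k θ)⁻¹ i₅ i₆ =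
      (2 * ((k : ℝ) + 1) ^ 2 + 4 * ((k : ℝ) + 1) + 2) / (k : ℝ)) ∧
    (∑ i₁, ∑ i₂, ∑ i₃, ∑ i₄, ∑ i₅, ∑ i₆,
        lderiv [i₁, i₂, i₃] (psiSph k) θ * lderiv [i₄, i₅, i₆] (psiSph k) θ *
          (gSph k θ)⁻¹ i₁ i₄ * (gSph k θ)⁻¹ i₂ i₅ * (gSph k θ)⁻¹ i₃ i₆ =
      (6 * ((k : ℝ) + 1) + 2) / (k : ℝ)) ∧
    ((1 / 8) * ((8 * ((k : ℝ) + 1) + 4) / (k : ℝ)) -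
        (1 / 8) * ((2 * ((k : ℝ) + 1) ^ 2 + 4 * ((k : ℝ) + 1) + 2) / (k : ℝ)) -
        (1 / 12) * ((6 * ((k : ℝ) + 1) + 2) / (k : ℝ)) =
      (1 - 3 * ((k : ℝ) + 1) ^ 2) / (12 * (k : ℝ))) := by
  have hk₀ : (k : ℝ) ≠ 0 := by positivity
  set h := perspectiveHessian (Fin.last k) θ
  set τ := logCovector (Fin.last k) θ
  set G := inverseMetric (Fin.last k) (k / 2) θ
  have hG : G.IsSymm := inverseMetric_isSymm _
  have hh : h.IsSymm := perspectiveHessian_isSymm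
  have hτ : h *ᵥ (G *ᵥ τ) = 0 := perspectiveHessian_mulVec_inverseMetric_mulVec _ hθ.ne
  have hnorm : τ ⬝ᵥ (G *ᵥ τ) = 2 / k := by
    rw [logCovector_dotProduct_inverseMetric_mulVec _ hθ.ne, inv_div]
  have htrace : trace (h * G) = k := by
    rw [trace_perspectiveHessian_mul_inverseMetric _ hθ.ne, Nat.cast_succ, add_sub_cancel_right]
  have hidem : h * G * (h * G) = h * G :=
    isIdempotentElem_perspectiveHessian_mul_inverseMetric _ hθ.ne
  have hκ₃ (i j l) : lderiv [i, j, l] (psiSph k) θ = cubicTensor (-1) (-(k : ℝ)) h τ i j l :=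
    lderiv_three_psiSph i j l hθ.ne
  have hκ₄ (i j l m) : lderiv [i, j, l, m] (psiSph k) θ =
      quarticTensor 2 (3 * (k : ℝ)) h τ i j l m :=
    lderiv_four_psiSph i j l m hθ.ne
  have hinv : (gSph k θ)⁻¹ = G := gSph_inv (Nat.one_le_iff_ne_zero.mp hk) hθ.ne
  simp only [hκ₃, hκ₄, hinv, sum_quarticTensor_mul_mul _ _ hG hτ,
    sum_cubicTensor_mul_cubicTensor_mul_chain _ _ hG hτ,
    sum_cubicTensor_mul_cubicTensor_mul_full _ _ hG hh hτ, hidem, htrace, hnorm]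
  refine ⟨?_, ?_, ?_, ?_⟩ <;> field_simp <;> ring
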